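/- Let Z be a standard Gaussian random variable, μ ∈ ℝ, σ > 0, λ > 0 with σλ < π, and let X = μ + σ|Z|, with m := E[X] = μ + σ√(2/π). Then the exponentially tilted mean squared error about m is strictly smaller than the untilted one: E[(X - m)² e^{-λX}] / E[e^{-λX}] < E[(X - m)²] = σ²(1 - 2/π). Equivalently, writing C = σ·φ(σλ)/P(Z ≥ σλ) with φ(a) = exp(-a²/2)/√(2π) the standard Gaussian density, one has (C - σ²λ)·(σ²λ + 2σ√(2/π)) > 4σ²/π. -/

import Mathlib

open MeasureTheory ProbabilityTheory Real

/-- Unnormalised Gaussian density. -/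
noncomputable def gE (x : ℝ) : ℝ := Real.exp (-(1 / 2 : ℝ) * x ^ 2)

/-- Unnormalised Gaussian upper tail. -/
noncomputable def gQ (a : ℝ) : ℝ := ∫ x in Set.Ioi a, gE x

lemma gE_pos (x : ℝ) : 0 < gE x := Real.exp_pos _

lemma gE_hasDerivAt (x : ℝ) : HasDerivAt gE (-x * gE x) x := by
  have h : HasDerivAt (fun x : ℝ => -(1 / 2 : ℝ) * x ^ 2) (-x) x := by
    have := (hasDerivAt_pow 2 x).const_mul (-(1 / 2 : ℝ))
    refine HasDerivAt.congr_deriv this ?_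
    norm_num
    ring
  have := h.exp
  refine HasDerivAt.congr_deriv this ?_
  unfold gE
  ring

lemma gE_continuous : Continuous gE := by unfold gE; fun_prop

lemma gE_int : Integrable gE := integrable_exp_neg_mul_sq (by norm_num)

lemma gE_int1 : Integrable (fun x => x * gE x) := integrable_mul_exp_neg_mul_sq (by norm_num)

lemma gE_int2 : Integrable (fun x => x ^ 2 * gE x) := by
  have := integrable_rpow_mul_exp_neg_mul_sq (b := 1 / 2) (by norm_num) (s := 2) (by norm_num)
  simpa [gE] using this

lemma gE_tendsto : Filter.Tendsto gE Filter.atTop (nhds 0) := by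
  refine tendsto_zero_of_hasDerivAt_of_integrableOn_Ioi (a := 0)
    (fun x _ => gE_hasDerivAt x) ?_ gE_int.integrableOn
  have := gE_int1.neg.integrableOn (s := Set.Ioi 0)
  refine this.congr_fun (fun x _ => ?_) measurableSet_Ioi
  simp

lemma gQ_zero : gQ 0 = √(π * 2) / 2 := by
  have := integral_gaussian_Ioi (1 / 2)
  unfold gQ gE
  rw [this]
  congr 2
  ring

lemma gQ_pos (a : ℝ) : 0 < gQ a := by
  unfold gQ
  rw [setIntegral_pos_iff_support_of_nonneg_ae]
  · have : Function.support gE = Set.univ := by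
      ext x; simp [(gE_pos x).ne']
    simp [this]
  · exact Filter.Eventually.of_forall fun x => (gE_pos x).le
  · exact gE_int.integrableOn

lemma gQ_hasDerivAt (a : ℝ) : HasDerivAt gQ (-gE a) a := by
  have h : gQ = fun a => gQ 0 - ∫ x in (0 : ℝ)..a, gE x := by
    funext a
    have := intervalIntegral.integral_interval_add_Ioi (a := 0) (b := a)
      gE_int.integrableOn gE_int.integrableOn
    unfold gQ
    linarith
  rw [h]
  have := (gE_continuous.integral_hasStrictDerivAt 0 a).hasDerivAt
  exact this.const_sub _

/-- second moment about `b` on the tail -/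
lemma tail_moment (a b : ℝ) :
    ∫ w in Set.Ioi a, (w - b) ^ 2 * gE w = (1 + b ^ 2) * gQ a + (a - 2 * b) * gE a := by
  have hd : ∀ x, HasDerivAt (fun w => (2 * b - w) * gE w)
      ((x ^ 2 * gE x - (2 * b) * (x * gE x)) - gE x) x := by
    intro x
    have := ((hasDerivAt_id x).const_sub (2 * b)).mul (gE_hasDerivAt x)
    refine HasDerivAt.congr_deriv this ?_
    simp
    ring
  have hi : Integrable (fun x => (x ^ 2 * gE x - (2 * b) * (x * gE x)) - gE x) :=
    (gE_int2.sub (gE_int1.const_mul _)).sub gE_int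
  have hi0 : Integrable (fun w => (2 * b - w) * gE w) := by
    have := (gE_int.const_mul (2 * b)).sub gE_int1
    refine this.congr (Filter.Eventually.of_forall fun x => ?_)
    simp
    ring
  have ht := tendsto_zero_of_hasDerivAt_of_integrableOn_Ioi (a := a)
    (fun x _ => hd x) hi.integrableOn hi0.integrableOn
  have key := integral_Ioi_of_hasDerivAt_of_tendsto' (a := a) (fun x _ => hd x)
    hi.integrableOn ht
  have : ∫ w in Set.Ioi a, (w - b) ^ 2 * gE w =
      ∫ w in Set.Ioi a, (((w ^ 2 * gE w - (2 * b) * (w * gE w)) - gE w) + (1 + b ^ 2) * gE w) := by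
    congr 1
    funext w
    ring
  rw [this, integral_add hi.integrableOn (gE_int.const_mul _).integrableOn, key,
    integral_const_mul]
  unfold gQ
  ring

lemma gauss_abs (f : ℝ → ℝ) :
    ∫ z, f |z| ∂(gaussianReal 0 1) =
      (√(2 * π))⁻¹ * (2 * ∫ z in Set.Ioi (0 : ℝ), gE z * f z) := by
  rw [integral_gaussianReal_eq_integral_smul one_ne_zero]
  rw [← integral_comp_abs (f := fun z => gE z * f z), ← integral_const_mul]
  congr 1
  funext z
  simp only [gaussianPDFReal, gE, smul_eq_mul, NNReal.coe_one, sq_abs]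
  have : -(z - 0) ^ 2 / (2 * 1) = -(1 / 2 : ℝ) * z ^ 2 := by ring
  rw [this]
  simp
  ring

lemma shift_Ioi (a : ℝ) (f : ℝ → ℝ) :
    ∫ z in Set.Ioi (0 : ℝ), f (z + a) = ∫ w in Set.Ioi a, f w := by
  have := (measurePreserving_add_right (volume : Measure ℝ) a).setIntegral_preimage_emb
    (MeasurableEquiv.addRight a).measurableEmbedding f (Set.Ioi a)
  simpa using this

lemma gE_shift (a z : ℝ) : gE z * Real.exp (-(a * z)) = Real.exp (a ^ 2 / 2) * gE (z + a) := by
  unfold gE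
  rw [← Real.exp_add, ← Real.exp_add]
  congr 1
  ring

lemma tilt0 (a : ℝ) : ∫ z, Real.exp (-(a * |z|)) ∂(gaussianReal 0 1) =
    (√(2 * π))⁻¹ * (2 * (Real.exp (a ^ 2 / 2) * gQ a)) := by
  rw [gauss_abs (fun z => Real.exp (-(a * z)))]
  simp only [gE_shift]
  rw [integral_const_mul, shift_Ioi a gE]
  rfl

lemma tilt2 (a c : ℝ) : ∫ z, (|z| - c) ^ 2 * Real.exp (-(a * |z|)) ∂(gaussianReal 0 1) =
    (√(2 * π))⁻¹ * (2 * (Real.exp (a ^ 2 / 2) *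
      ((1 + (a + c) ^ 2) * gQ a - (a + 2 * c) * gE a))) := by
  rw [gauss_abs (fun z => (z - c) ^ 2 * Real.exp (-(a * z)))]
  have : ∀ z, gE z * ((z - c) ^ 2 * Real.exp (-(a * z))) =
      Real.exp (a ^ 2 / 2) * ((fun w => (w - (a + c)) ^ 2 * gE w) (z + a)) := by
    intro z
    have := gE_shift a z
    simp only
    linear_combination (z - c) ^ 2 * this
  simp only [this]
  rw [integral_const_mul, shift_Ioi a (fun w => (w - (a + c)) ^ 2 * gE w), tail_moment]
  ring

lemma prob_tail (a : ℝ) : ((gaussianReal 0 1) {z : ℝ | a ≤ z}).toReal = (√(2 * π))⁻¹ * gQ a := by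
  have h1 : {z : ℝ | a ≤ z} = Set.Ici a := rfl
  have h2 : ∫ x in Set.Ici a, gaussianPDFReal 0 1 x = (√(2 * π))⁻¹ * gQ a := by
    rw [integral_Ici_eq_integral_Ioi]
    unfold gQ
    rw [← integral_const_mul]
    congr 1
    funext z
    simp only [gaussianPDFReal, gE, NNReal.coe_one]
    have : -(z - 0) ^ 2 / (2 * 1) = -(1 / 2 : ℝ) * z ^ 2 := by ring
    rw [this]
    simp
  rw [h1, gaussianReal_apply_eq_integral _ one_ne_zero, h2, ENNReal.toReal_ofReal]
  have := gQ_pos a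
  positivity

/-- Continued fraction upper bound for the Gaussian tail. -/
lemma gQ_le (a : ℝ) (ha : 0 < a) :
    gQ a ≤ gE a * ((a ^ 4 + 9 * a ^ 2 + 8) / (a ^ 5 + 10 * a ^ 3 + 15 * a)) := by
  set F : ℝ → ℝ := fun x => gE x * ((x ^ 4 + 9 * x ^ 2 + 8) / (x ^ 5 + 10 * x ^ 3 + 15 * x))
    with hF
  have hd : ∀ x ∈ Set.Ici a, HasDerivAt F
      (-(gE x * (1 + 120 / (x ^ 5 + 10 * x ^ 3 + 15 * x) ^ 2))) x := by
    intro x hx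
    have hx0 : 0 < x := lt_of_lt_of_le ha hx
    have hne : x ^ 5 + 10 * x ^ 3 + 15 * x ≠ 0 := by positivity
    have hn : HasDerivAt (fun x : ℝ => x ^ 4 + 9 * x ^ 2 + 8) (4 * x ^ 3 + 18 * x) x := by
      have := (((hasDerivAt_pow 4 x).add ((hasDerivAt_pow 2 x).const_mul 9)).add_const 8)
      refine HasDerivAt.congr_deriv this ?_
      norm_num
      ring
    have hq : HasDerivAt (fun x : ℝ => x ^ 5 + 10 * x ^ 3 + 15 * x)
        (5 * x ^ 4 + 30 * x ^ 2 + 15) x := by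
      have := (((hasDerivAt_pow 5 x).add ((hasDerivAt_pow 3 x).const_mul 10)).add
        ((hasDerivAt_id x).const_mul 15))
      refine HasDerivAt.congr_deriv this ?_
      norm_num
      ring
    have := (gE_hasDerivAt x).mul (hn.div hq hne)
    refine HasDerivAt.congr_deriv this ?_
    simp only [Pi.div_apply]
    field_simp
    ring
  have hneg : ∀ x ∈ Set.Ioi a,
      -(gE x * (1 + 120 / (x ^ 5 + 10 * x ^ 3 + 15 * x) ^ 2)) ≤ 0 := by
    intro x _
    have := gE_pos x
    have : 0 ≤ gE x * (1 + 120 / (x ^ 5 + 10 * x ^ 3 + 15 * x) ^ 2) := by positivity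
    linarith
  have ht : Filter.Tendsto F Filter.atTop (nhds 0) := by
    refine squeeze_zero' (g := gE) ?_ ?_ gE_tendsto
    · filter_upwards [Filter.eventually_ge_atTop 1] with x hx
      have := gE_pos x
      have : 0 < x := by linarith
      simp only [hF]
      positivity
    · filter_upwards [Filter.eventually_ge_atTop 1] with x hx
      have h1 := gE_pos x
      have h0 : 0 < x := by linarith
      simp only [hF]
      refine mul_le_of_le_one_right h1.le ?_
      rw [div_le_one (by positivity)]
      have h2 : x ^ 4 ≤ x ^ 5 := pow_le_pow_right₀ hx (by norm_num)
      have h3 : x ^ 2 ≤ x ^ 3 := pow_le_pow_right₀ hx (by norm_num)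
      have h4 : 0 < x ^ 3 := by positivity
      linarith
  have hint := integrableOn_Ioi_deriv_of_nonpos' hd hneg ht
  have hval := integral_Ioi_of_hasDerivAt_of_nonpos' hd hneg ht
  have hmono : ∫ x in Set.Ioi a, -(gE x * (1 + 120 / (x ^ 5 + 10 * x ^ 3 + 15 * x) ^ 2)) ≤
      ∫ x in Set.Ioi a, -gE x := by
    refine setIntegral_mono hint gE_int.neg.integrableOn fun x => ?_
    have h1 := gE_pos x
    have : 0 ≤ gE x * (120 / (x ^ 5 + 10 * x ^ 3 + 15 * x) ^ 2) := by positivity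
    simp only
    linarith
  rw [hval, integral_neg] at hmono
  change gQ a ≤ F a
  unfold gQ
  linarith

/-- the key inequality at the endpoint -/
lemma key_pi (c : ℝ) (hc : 0 < c) (hc2 : c ^ 2 = 2 / π) :
    gQ π < gE π * ((π + 2 * c) / (π ^ 2 + 2 * c * π + 2 * c ^ 2)) := by
  refine lt_of_le_of_lt (gQ_le π pi_pos) ?_
  refine mul_lt_mul_of_pos_left ?_ (gE_pos _)
  have hp := pi_pos
  have h1 := pi_gt_d4
  have h2 := pi_lt_d4
  have hcl : 0.797 < c := by
    by_contra h
    push Not at h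
    have : c ^ 2 ≤ 0.797 ^ 2 := by gcongr
    rw [hc2, div_le_iff₀ hp] at this
    norm_num at this
    linarith
  rw [div_lt_div_iff₀ (by positivity) (by positivity)]
  have hc3 : c ^ 2 * π = 2 := by rw [hc2]; field_simp
  have hc4 : c ^ 2 < 0.6367 := by
    rw [hc2, div_lt_iff₀ hp]; linarith
  -- reduces to 2c²(x⁴+9x²+8) < (x+2c)(x³+7x)
  have e : (π ^ 4 + 9 * π ^ 2 + 8) * 2 * c ^ 2 < (π + 2 * c) * (π ^ 3 + 7 * π) := by
    have b1 : (π ^ 4 + 9 * π ^ 2 + 8) * 2 * c ^ 2 ≤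
      (3.1416 ^ 4 + 9 * 3.1416 ^ 2 + 8) * 2 * 0.6367 := by gcongr
    have b2 : (3.1415 + 2 * 0.797) * (3.1415 ^ 3 + 7 * 3.1415) ≤
      (π + 2 * c) * (π ^ 3 + 7 * π) := by gcongr
    norm_num at b1 b2 ⊢
    linarith
  nlinarith [e]

lemma key (a c : ℝ) (ha : 0 < a) (haπ : a < π) (hc : 0 < c) (hc2 : c ^ 2 = 2 / π) :
    gQ a * (a ^ 2 + 2 * c * a + 2 * c ^ 2) < gE a * (a + 2 * c) := by
  set G : ℝ → ℝ := fun x => gE x * ((x + 2 * c) / (x ^ 2 + 2 * c * x + 2 * c ^ 2)) - gQ x with hG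
  set q : ℝ → ℝ := fun x => (2 * c ^ 2 - 1) * x ^ 2 + 4 * c * (c ^ 2 - 1) * x
    + 2 * c ^ 2 * (2 * c ^ 2 - 1) with hq
  have hp := pi_pos
  have h1 := pi_gt_d4
  have h2 := pi_lt_d4
  have hD : ∀ x, 0 < x ^ 2 + 2 * c * x + 2 * c ^ 2 := fun x => by
    nlinarith [sq_nonneg (x + c), pow_pos hc 2]
  have hd : ∀ x, HasDerivAt G (gE x / (x ^ 2 + 2 * c * x + 2 * c ^ 2) ^ 2 * q x) x := by
    intro x
    have hne := (hD x).ne'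
    have hn : HasDerivAt (fun x : ℝ => x + 2 * c) 1 x := (hasDerivAt_id x).add_const _
    have hqq : HasDerivAt (fun x : ℝ => x ^ 2 + 2 * c * x + 2 * c ^ 2) (2 * x + 2 * c) x := by
      have := (((hasDerivAt_pow 2 x).add ((hasDerivAt_id x).const_mul (2 * c))).add_const
        (2 * c ^ 2))
      refine HasDerivAt.congr_deriv this ?_
      norm_num
    have := ((gE_hasDerivAt x).mul (hn.div hqq hne)).sub (gQ_hasDerivAt x)
    refine HasDerivAt.congr_deriv this ?_
    simp only [hq, Pi.div_apply]
    generalize hDx : x ^ 2 + 2 * c * x + 2 * c ^ 2 = D at hne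
    field_simp
    rw [← hDx]
    ring
  have hcont : Continuous G := continuous_iff_continuousAt.2 fun x => (hd x).continuousAt
  have hG0 : G 0 = 0 := by
    have hcs : √(π * 2) = 2 / c := by
      rw [Real.sqrt_eq_iff_mul_self_eq_of_pos (by positivity), ← pow_two, div_pow, hc2]
      field_simp
    simp only [hG, gQ_zero, hcs]
    simp [gE]
    field_simp
    norm_num
  have hGπ : 0 < G π := sub_pos.2 (key_pi c hc hc2)
  have hcl : 0.6366 < c ^ 2 := by
    rw [hc2, lt_div_iff₀ hp]; linarith
  have hcu : c ^ 2 < 0.6367 := by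
    rw [hc2, div_lt_iff₀ hp]; linarith
  have hcl' : 0.797 < c := by
    by_contra h
    push Not at h
    have : c ^ 2 ≤ 0.797 ^ 2 := by gcongr
    norm_num at this hcl
    linarith
  have hq0 : 0 < q 0 := by
    simp only [hq]
    have : 0 < 2 * c ^ 2 - 1 := by linarith
    have : 0 < 2 * c ^ 2 * (2 * c ^ 2 - 1) := by positivity
    simpa using this
  have hqπ : q π < 0 := by
    simp only [hq]
    have b1 : (2 * c ^ 2 - 1) * π ^ 2 ≤ (2 * 0.6367 - 1) * 3.1416 ^ 2 := by gcongr; 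
    have b2 : 4 * 0.797 * (1 - 0.6367) * 3.1415 ≤ 4 * c * (1 - c ^ 2) * π := by
      have : 0 ≤ 1 - c ^ 2 := by linarith
      gcongr
    have b3 : 2 * c ^ 2 * (2 * c ^ 2 - 1) ≤ 2 * 0.6367 * (2 * 0.6367 - 1) := by
      gcongr; linarith
    norm_num at b1 b2 b3
    nlinarith
  obtain ⟨s, hs, hqs⟩ : ∃ s ∈ Set.Icc 0 π, q s = 0 := by
    have hqc : ContinuousOn q (Set.Icc 0 π) := by
      simp only [hq]; fun_prop
    exact intermediate_value_Icc' hp.le hqc ⟨hqπ.le, hq0.le⟩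
  have hfac : ∀ x, q x = (x - s) * ((2 * c ^ 2 - 1) * (x + s) + 4 * c * (c ^ 2 - 1)) := by
    intro x
    have : q x = q x - q s := by rw [hqs, sub_zero]
    rw [this]; simp only [hq]; ring
  have hsπ : s < π := by
    rcases hs.2.eq_or_lt with h | h
    · rw [h] at hqs; linarith
    · exact h
  have hlin : ∀ x ≤ π, (2 * c ^ 2 - 1) * (x + s) + 4 * c * (c ^ 2 - 1) < 0 := by
    intro x hx
    have h3 := hfac π
    have h4 : (2 * c ^ 2 - 1) * (π + s) + 4 * c * (c ^ 2 - 1) < 0 := by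
      by_contra h
      push Not at h
      have := mul_nonneg (sub_pos.2 hsπ).le h
      linarith
    nlinarith
  have hpos : 0 < G a := by
    rcases le_or_gt a s with has | has
    · have hm : StrictMonoOn G (Set.Icc 0 s) := by
        refine strictMonoOn_of_deriv_pos (convex_Icc _ _) hcont.continuousOn fun x hx => ?_
        rw [interior_Icc] at hx
        rw [(hd x).deriv]
        have hqx : 0 < q x := by
          rw [hfac]
          exact mul_pos_of_neg_of_neg (by linarith [hx.2]) (hlin x (by linarith [hx.2]))
        have := gE_pos x
        have := hD x
        positivity
      have := hm ⟨le_rfl, hs.1⟩ ⟨ha.le, has⟩ ha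
      linarith
    · have hm : StrictAntiOn G (Set.Icc s π) := by
        refine strictAntiOn_of_deriv_neg (convex_Icc _ _) hcont.continuousOn fun x hx => ?_
        rw [interior_Icc] at hx
        rw [(hd x).deriv]
        have hqx : q x < 0 := by
          rw [hfac]
          exact mul_neg_of_pos_of_neg (by linarith [hx.1]) (hlin x (by linarith [hx.2]))
        have := gE_pos x
        have := hD x
        exact mul_neg_of_pos_of_neg (by positivity) hqx
      have := hm ⟨has.le, haπ.le⟩ ⟨hsπ.le, le_rfl⟩ haπ
      linarith
  simp only [hG] at hpos
  have h5 := sub_pos.1 hpos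
  rw [← mul_div_assoc, lt_div_iff₀ (hD a)] at h5
  exact h5


/-- Paper's Theorem 2. For `Z ~ N(0,1)`, `σ > 0`, `λ > 0` with `σλ < π`, `X = μ + σ|Z|`,
`m = μ + σ√(2/π)`, and `C = σ·φ(σλ)/P(Z ≥ σλ)`: the tilted MSE about `m` is strictly
smaller than the untilted one, the untilted MSE equals `σ²(1 - 2/π)`, and equivalently
`(C - σ²λ)(σ²λ + 2σ√(2/π)) > 4σ²/π`. -/
theorem halfNormal_tilted_mse_lt_untilted (μ σ lam C m : ℝ) (hσ : 0 < σ) (hlam : 0 < lam)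
    (hσlam : σ * lam < π)
    (hm : m = μ + σ * Real.sqrt (2 / π))
    (hC : C = σ * (Real.exp (-(σ * lam) ^ 2 / 2) / Real.sqrt (2 * π)) /
      ((gaussianReal 0 1) {z : ℝ | σ * lam ≤ z}).toReal) :
    (∫ z, ((μ + σ * |z|) - m) ^ 2 * Real.exp (-(lam * (μ + σ * |z|))) ∂(gaussianReal 0 1)) /
        (∫ z, Real.exp (-(lam * (μ + σ * |z|))) ∂(gaussianReal 0 1)) <
      ∫ z, ((μ + σ * |z|) - m) ^ 2 ∂(gaussianReal 0 1) ∧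
    (∫ z, ((μ + σ * |z|) - m) ^ 2 ∂(gaussianReal 0 1)) = σ ^ 2 * (1 - 2 / π) ∧
    (C - σ ^ 2 * lam) * (σ ^ 2 * lam + 2 * σ * Real.sqrt (2 / π)) > 4 * σ ^ 2 / π := by
  have hp := pi_pos
  obtain ⟨c, hcdef⟩ : ∃ c, c = √(2 / π) := ⟨_, rfl⟩
  have hc : 0 < c := by rw [hcdef]; positivity
  have hc2 : c ^ 2 = 2 / π := by rw [hcdef, Real.sq_sqrt (by positivity)]
  rw [← hcdef] at hm ⊢
  obtain ⟨a, hadef⟩ : ∃ a, a = σ * lam := ⟨_, rfl⟩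
  have ha : 0 < a := by rw [hadef]; positivity
  rw [← hadef] at hC hσlam
  have hk := key a c ha hσlam hc hc2
  have hQ := gQ_pos a
  have hs2 : √(2 * π) = 2 / c := by
    rw [Real.sqrt_eq_iff_mul_self_eq_of_pos (by positivity), ← pow_two, div_pow, hc2]
    field_simp
  have hQ0 : gQ 0 = 1 / c := by
    rw [gQ_zero, mul_comm, hs2]; field_simp
  have hE0 : gE 0 = 1 := by simp [gE]
  have I0 : ∫ z, ((μ + σ * |z|) - m) ^ 2 ∂(gaussianReal 0 1) = σ ^ 2 * (1 - c ^ 2) := by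
    have h := tilt2 0 c
    have : ∀ z : ℝ, ((μ + σ * |z|) - m) ^ 2 =
        σ ^ 2 * ((|z| - c) ^ 2 * Real.exp (-(0 * |z|))) := by
      intro z; simp [hm]; ring
    simp only [this]
    rw [integral_const_mul, h, hQ0, hE0, hs2]
    have : Real.exp (0 ^ 2 / 2) = 1 := by simp
    rw [this]
    field_simp
    ring
  have I1 : ∫ z, Real.exp (-(lam * (μ + σ * |z|))) ∂(gaussianReal 0 1) =
      Real.exp (-(lam * μ)) * ((√(2 * π))⁻¹ * (2 * (Real.exp (a ^ 2 / 2) * gQ a))) := by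
    rw [← tilt0, ← integral_const_mul]
    congr 1
    funext z
    rw [← Real.exp_add, hadef]
    congr 1
    ring
  have I2 : ∫ z, ((μ + σ * |z|) - m) ^ 2 * Real.exp (-(lam * (μ + σ * |z|)))
      ∂(gaussianReal 0 1) =
      (σ ^ 2 * Real.exp (-(lam * μ))) * ((√(2 * π))⁻¹ * (2 * (Real.exp (a ^ 2 / 2) *
      ((1 + (a + c) ^ 2) * gQ a - (a + 2 * c) * gE a)))) := by
    rw [← tilt2, ← integral_const_mul]
    congr 1
    funext z
    have : Real.exp (-(lam * (μ + σ * |z|))) =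
        Real.exp (-(lam * μ)) * Real.exp (-(a * |z|)) := by
      rw [← Real.exp_add, hadef]
      congr 1
      ring
    rw [this, hm]
    ring
  have hsp : 0 < √(2 * π) := by positivity
  refine ⟨?_, by rw [I0, hc2], ?_⟩
  · rw [I0, I1, I2, div_lt_iff₀ (by positivity)]
    have hK : 0 < σ ^ 2 * Real.exp (-(lam * μ)) * ((√(2 * π))⁻¹ * (2 * Real.exp (a ^ 2 / 2))) := by
      positivity
    have := mul_lt_mul_of_pos_left
      (show (1 + (a + c) ^ 2) * gQ a - (a + 2 * c) * gE a < (1 - c ^ 2) * gQ a by nlinarith) hK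
    linarith
  · have hC' : C = σ * (gE a / gQ a) := by
      rw [hC, prob_tail]
      have : Real.exp (-a ^ 2 / 2) = gE a := by unfold gE; congr 1; ring
      rw [this]
      field_simp
    have e1 : 4 * σ ^ 2 / π = σ ^ 2 * (2 * c ^ 2) := by rw [hc2]; ring
    have e2 : (C - σ ^ 2 * lam) * (σ ^ 2 * lam + 2 * σ * c) =
        σ ^ 2 * ((gE a / gQ a - a) * (a + 2 * c)) := by
      rw [hC', hadef]; ring
    rw [gt_iff_lt, e1, e2]
    refine mul_lt_mul_of_pos_left ?_ (by positivity)
    have h6 : a ^ 2 + 2 * c * a + 2 * c ^ 2 < gE a / gQ a * (a + 2 * c) := by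
      rw [div_mul_eq_mul_div, lt_div_iff₀ hQ]
      linarith
    linarith
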